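/- Let R be a commutative ring and let a, b : ℤ → R be sequences with a_n = b_n = 0 for n < 0, a_0 = b_0 = 1, and such that for every n ≥ 1 one has ∑_{i=0}^{n} (−1)^i a_i b_{n−i} = 0 (i.e. the generating series A(t) = ∑ a_i t^i and B(−t) = ∑ (−1)^j b_j t^j are mutually inverse in R[[t]]). Let ℓ, m ≥ 1 and let λ_1 ≥ λ_2 ≥ ⋯ ≥ λ_ℓ ≥ 0 be integers with λ_1 ≤ m, and let λ'_j = #{i : λ_i ≥ j} for 1 ≤ j ≤ m be the conjugate partition. Then det_{1≤i,j≤ℓ}(a_{λ_i − i + j}) = det_{1≤i,j≤m}(b_{λ'_i − i + j}). (This is the duality identity Δ_λ(c(F − E)) = Δ_{λ^∨}(c(E* − F*)) invoked in §1.1.1, stated in its universal form for any pair of sequences inverse to each other up to alternating signs.) -/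

import Mathlib

/-!
The Toeplitz matrices of two sequences with reciprocal generating series are inverse to each other.
The determinant of `a (λ i - i + j)` is a minor of the first one, and Jacobi's identity equates it,
up to sign, with the complementary minor of the second one. The rows of the minor are the vertical
steps of the boundary path of the Young diagram of `λ`, so the complementary indices are the
horizontal steps, which are given by the conjugate partition. The sign of the permutation that
separates the two kinds of steps is `(-1) ^ |λ|`, one inversion for each cell of the diagram, and
it cancels the signs `(-1) ^ n` in the reciprocal series.
-/

open Finset

section ComplementaryMinor

open Matrix

variable {R ι κ n : Type*} [CommRing R] [Fintype ι] [DecidableEq ι] [Fintype κ] [DecidableEq κ]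
  [Fintype n] [DecidableEq n]

theorem det_toBlocks₁₁_eq_det_mul_det_toBlocks₂₂ {H E : Matrix (ι ⊕ κ) (ι ⊕ κ) R}
    (h : H * E = 1) : H.toBlocks₁₁.det = H.det * E.toBlocks₂₂.det := by
  have hmul : H * fromBlocks 1 E.toBlocks₁₂ 0 E.toBlocks₂₂ =
      fromBlocks H.toBlocks₁₁ 0 H.toBlocks₂₁ 1 := by
    rw [← fromBlocks_toBlocks H, ← fromBlocks_toBlocks E, fromBlocks_multiply, ← fromBlocks_one,
      fromBlocks_inj] at h
    obtain ⟨-, h₁₂, -, h₂₂⟩ := h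
    conv_lhs => rw [← fromBlocks_toBlocks H]
    rw [fromBlocks_multiply, h₁₂, h₂₂]
    simp
  simpa using (congrArg det hmul).symm

theorem det_minor_eq_sign_mul_det_mul_det_complementary_minor {H E : Matrix n n R}
    (h : H * E = 1) (e : ι ⊕ κ ≃ n) (π : Equiv.Perm n) :
    (H.submatrix (π ∘ e ∘ Sum.inl) (e ∘ Sum.inl)).det =
      Equiv.Perm.sign π * H.det * (E.submatrix (e ∘ Sum.inr) (π ∘ e ∘ Sum.inr)).det := by
  have hinv : H.submatrix (π ∘ e) e * E.submatrix e (π ∘ e) = 1 := by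
    rw [submatrix_mul_equiv, h]
    exact submatrix_one_equiv (e.trans π)
  have hdet : (H.submatrix (π ∘ e) e).det = Equiv.Perm.sign π * H.det := by
    rw [← det_permute, ← det_submatrix_equiv_self e, submatrix_submatrix, Function.id_comp]
  rw [← hdet]
  exact det_toBlocks₁₁_eq_det_mul_det_toBlocks₂₂ hinv

end ComplementaryMinor

theorem sign_eq_neg_one_pow_of_strictMono_blocks {ℓ m : ℕ} (π : Equiv.Perm (Fin (ℓ + m)))
    (hl : StrictMono (π ∘ Fin.castAdd m)) (hr : StrictMono (π ∘ Fin.natAdd ℓ)) :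
    Equiv.Perm.sign π =
      (-1) ^ ∑ j : Fin m, #{i : Fin ℓ | π (Fin.natAdd ℓ j) < π (Fin.castAdd m i)} := by
  have hprod : Equiv.Perm.sign π =
      ∏ j, ∏ i, if i < j then if π i < π j then (1 : ℤˣ) else -1 else 1 := by
    simp_rw [Equiv.Perm.sign_eq_prod_prod_Iio, ← prod_filter, filter_gt_eq_Iio]
  have hll (i j : Fin ℓ) (hij : Fin.castAdd m i < Fin.castAdd m j) :
      π (Fin.castAdd m i) < π (Fin.castAdd m j) := hl hij
  have hrr (i j : Fin m) (hij : i < j) : π (Fin.natAdd ℓ i) < π (Fin.natAdd ℓ j) := hr hij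
  have hlr (i : Fin ℓ) (j : Fin m) : Fin.castAdd m i < Fin.natAdd ℓ j := by
    simp only [Fin.lt_def, Fin.val_castAdd, Fin.val_natAdd]
    omega
  have hinversion (i : Fin ℓ) (j : Fin m) :
      (if π (Fin.castAdd m i) < π (Fin.natAdd ℓ j) then (1 : ℤˣ) else -1) =
        if π (Fin.natAdd ℓ j) < π (Fin.castAdd m i) then -1 else 1 := by
    have hne : π (Fin.castAdd m i) ≠ π (Fin.natAdd ℓ j) := π.injective.ne (hlr i j).ne
    grind
  calc Equiv.Perm.sign π
      = ∏ j : Fin m, ∏ i : Fin ℓ, if π (Fin.natAdd ℓ j) < π (Fin.castAdd m i) then -1 else 1 := by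
        simp +contextual [hprod, Fin.prod_univ_add, hll, hrr, hlr, (hlr _ _).not_gt, hinversion]
    _ = _ := by simp only [← prod_filter, prod_const, prod_pow_eq_pow_sum]

section Toeplitz

open Matrix

variable {R : Type*}

/-- The `n × n` Toeplitz matrix whose `k`-th diagonal, counted downwards from the main one, is
constantly `a k`. It is lower triangular if `a` vanishes in negative degrees. -/
def toeplitz (n : ℕ) (a : ℤ → R) : Matrix (Fin n) (Fin n) R :=
  of fun i j => a (i - j)

theorem toeplitz_eq_one [Zero R] [One R] {a : ℤ → R} (ha0 : a 0 = 1) (ha : ∀ k ≠ 0, a k = 0)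
    (n : ℕ) : toeplitz n a = 1 := by
  ext i j
  obtain rfl | hij := eq_or_ne i j
  · simp [toeplitz, ha0]
  · rw [one_apply_ne hij]
    exact ha _ (by omega)

theorem det_toeplitz [CommRing R] {a : ℤ → R} (ha : ∀ k < 0, a k = 0) (n : ℕ) :
    (toeplitz n a).det = a 0 ^ n := by
  rw [det_of_isLowerTriangular]
  · simp [toeplitz]
  · intro i j hij
    have : i < j := hij
    exact ha _ (by omega)

theorem toeplitz_mul_toeplitz [NonUnitalNonAssocSemiring R] {a b : ℤ → R}
    (ha : ∀ k < 0, a k = 0) (hb : ∀ k < 0, b k = 0) (n : ℕ) :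
    toeplitz n a * toeplitz n b =
      toeplitz n fun k => ∑ i ∈ range (k + 1).toNat, a i * b (k - i) := by
  ext p r
  simp only [mul_apply, toeplitz, of_apply]
  have hsupp (q : Fin n) (hq : a (p - q) * b (q - r) ≠ 0) : q ≤ p ∧ r ≤ q := by
    constructor <;> by_contra hlt
    · exact hq (by rw [ha _ (by omega), zero_mul])
    · exact hq (by rw [hb _ (by omega), mul_zero])
  refine sum_bij_ne_zero (fun q _ _ => (p - q : ℕ)) ?_ ?_ ?_ ?_
  · intro q _ hq
    have := hsupp q hq
    rw [mem_range]
    omega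
  · intro q _ hq q' _ hq' heq
    have := hsupp q hq
    have := hsupp q' hq'
    omega
  · intro i hi hne
    rw [mem_range] at hi
    have hpi : ((p - i : ℕ) : ℤ) = p - i := by omega
    refine ⟨⟨p - i, by omega⟩, mem_univ _, ?_, by simp only; omega⟩
    simpa [hpi, sub_right_comm] using hne
  · intro q _ hq
    have := hsupp q hq
    have hpq : ((p - q : ℕ) : ℤ) = p - q := by omega
    simp [hpq]

end Toeplitz

section SchurDet

variable {R : Type*} [CommRing R] {m : ℕ}

/-- The Schur-type determinant `Δ_μ(a)`. With rows and columns indexed from `0` the entries are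
still `a (μ i - i + j)`. -/
def schurDet (a : ℤ → R) (μ : Fin m → ℕ) : R :=
  (Matrix.of fun i j : Fin m => a (μ i - i + j)).det

/-- The sequence `(-1) ^ k * a k`, with generating series `A(-t)`. The sign is a unit because `k`
may be negative. -/
def alternate (a : ℤ → R) (k : ℤ) : R :=
  ((-1 : Rˣ) ^ k : Rˣ) * a k

theorem toeplitz_mul_toeplitz_alternate {a b : ℤ → R} (ha : ∀ k < 0, a k = 0)
    (hb : ∀ k < 0, b k = 0) (hab0 : a 0 * b 0 = 1)
    (hab : ∀ n : ℕ, 1 ≤ n → ∑ i ∈ range (n + 1), (-1 : R) ^ i * a i * b (n - i) = 0) (n : ℕ) :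
    toeplitz n a * toeplitz n (alternate b) = 1 := by
  rw [toeplitz_mul_toeplitz ha fun k hk => by rw [alternate, hb k hk, mul_zero]]
  refine toeplitz_eq_one (by simp [alternate, hab0]) (fun k hk => ?_) n
  obtain hneg | hpos := hk.lt_or_gt
  · rw [Int.toNat_of_nonpos (by omega), sum_range_zero]
  lift k to ℕ using hpos.le
  calc ∑ i ∈ range ((k : ℤ) + 1).toNat, a i * alternate b (k - i)
      = (-1) ^ k * ∑ i ∈ range (k + 1), (-1) ^ i * a i * b (k - i) := by
        rw [mul_sum]
        refine sum_congr rfl fun i _ => ?_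
        simp only [alternate, zpow_sub, zpow_natCast, ← inv_pow, inv_neg, inv_one, Units.val_mul,
          Units.val_pow_eq_pow_val, Units.val_neg, Units.val_one]
        ring
    _ = 0 := by rw [hab k (by omega), mul_zero]

theorem schurDet_alternate (a : ℤ → R) (μ : Fin m → ℕ) :
    schurDet (alternate a) μ = (-1) ^ (∑ i, μ i) * schurDet a μ := by
  have hfactor : (Matrix.of fun i j : Fin m => alternate a (μ i - i + j)) =
      Matrix.diagonal (fun i : Fin m => (-1) ^ (μ i + i)) *
        (Matrix.of fun i j : Fin m => a (μ i - i + j)) *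
        Matrix.diagonal fun j : Fin m => (-1) ^ (j : ℕ) := by
    ext i j
    simp [alternate, zpow_add, zpow_sub, ← inv_pow, pow_add, mul_right_comm]
  have hsign : (-1 : R) ^ (∑ i : Fin m, (i : ℕ)) * (-1) ^ (∑ i : Fin m, (i : ℕ)) = 1 :=
    pow_mul_pow_eq_one _ (by simp)
  rw [schurDet, hfactor, Matrix.det_mul, Matrix.det_mul, Matrix.det_diagonal, Matrix.det_diagonal,
    prod_pow_eq_pow_sum, prod_pow_eq_pow_sum, sum_add_distrib, pow_add, mul_right_comm,
    mul_assoc (_ ^ _), hsign, mul_one, schurDet]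

end SchurDet

section BoundaryPath

variable {ℓ m : ℕ} (lam : Fin ℓ → ℕ)

/-- The conjugate partition; the part called `λ'_(j+1)` in the usual indexing is
`conjugatePart lam j`. -/
def conjugatePart (j : ℕ) : ℕ :=
  #{t : Fin ℓ | j + 1 ≤ lam t}

theorem conjugatePart_le (j : ℕ) : conjugatePart lam j ≤ ℓ :=
  (card_filter_le _ _).trans_eq (by simp)

theorem antitone_conjugatePart : Antitone (conjugatePart lam) := fun _ _ hjk =>
  card_le_card (monotone_filter_right _ fun _ _ h => (Nat.succ_le_succ hjk).trans h)

variable {lam} in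
theorem lt_conjugatePart_iff (hlam : Antitone lam) (i : Fin ℓ) (j : ℕ) :
    i < conjugatePart lam j ↔ j < lam i :=
  Tuple.lt_card_ge_iff_apply_ge_of_antitone hlam

/-- The positions of the vertical steps on the boundary path of the Young diagram of `lam` inside
the `ℓ × m` rectangle. The path runs from the bottom left to the top right corner, so the parts of
`lam` are met in reverse order. -/
def verticalStep (hm : ∀ i, lam i ≤ m) (i : Fin ℓ) : Fin (ℓ + m) :=
  ⟨lam i.rev + i, by have := hm i.rev; omega⟩

/-- The positions of the horizontal steps on the boundary path of the Young diagram of `lam` inside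
the `ℓ × m` rectangle, read from the bottom left to the top right corner. -/
def horizontalStep (j : Fin m) : Fin (ℓ + m) :=
  ⟨ℓ + j - conjugatePart lam j, by omega⟩

theorem strictMono_horizontalStep : StrictMono (horizontalStep lam (m := m)) := by
  intro j k hjk
  have := conjugatePart_le lam j
  have := antitone_conjugatePart lam hjk.le
  simp only [horizontalStep, Fin.lt_def] at hjk ⊢
  omega

variable {lam}

theorem strictMono_verticalStep (hlam : Antitone lam) (hm : ∀ i, lam i ≤ m) :
    StrictMono (verticalStep lam hm) := by
  intro i j hij
  have := hlam (Fin.rev_le_rev.mpr hij.le)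
  simp only [verticalStep, Fin.lt_def] at hij ⊢
  omega

theorem horizontalStep_lt_verticalStep_iff (hlam : Antitone lam) (hm : ∀ i, lam i ≤ m)
    (i : Fin ℓ) (j : Fin m) :
    horizontalStep lam j < verticalStep lam hm i ↔ j < lam i.rev := by
  have hconj := lt_conjugatePart_iff hlam i.rev j
  have := conjugatePart_le lam j
  rw [Fin.val_rev] at hconj
  simp only [horizontalStep, verticalStep, Fin.lt_def]
  omega

theorem verticalStep_ne_horizontalStep (hlam : Antitone lam) (hm : ∀ i, lam i ≤ m)
    (i : Fin ℓ) (j : Fin m) : verticalStep lam hm i ≠ horizontalStep lam j := by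
  have hconj := lt_conjugatePart_iff hlam i.rev j
  have := conjugatePart_le lam j
  rw [Fin.val_rev] at hconj
  simp only [horizontalStep, verticalStep, ne_eq, Fin.mk.injEq]
  omega

/-- The permutation listing the positions of the vertical steps of the boundary path first and
those of the horizontal steps last. -/
noncomputable def boundaryPerm (hlam : Antitone lam) (hm : ∀ i, lam i ≤ m) :
    Equiv.Perm (Fin (ℓ + m)) :=
  Equiv.ofBijective (Fin.append (verticalStep lam hm) (horizontalStep lam)) <|
    Finite.injective_iff_bijective.mp <| Fin.append_injective_iff.mpr
      ⟨(strictMono_verticalStep hlam hm).injective, (strictMono_horizontalStep lam).injective,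
        verticalStep_ne_horizontalStep hlam hm⟩

theorem boundaryPerm_castAdd (hlam : Antitone lam) (hm : ∀ i, lam i ≤ m) (i : Fin ℓ) :
    boundaryPerm hlam hm (Fin.castAdd m i) = verticalStep lam hm i :=
  Fin.append_left _ _ i

theorem boundaryPerm_natAdd (hlam : Antitone lam) (hm : ∀ i, lam i ≤ m) (j : Fin m) :
    boundaryPerm hlam hm (Fin.natAdd ℓ j) = horizontalStep lam j :=
  Fin.append_right _ _ j

theorem sign_boundaryPerm (hlam : Antitone lam) (hm : ∀ i, lam i ≤ m) :
    Equiv.Perm.sign (boundaryPerm hlam hm) = (-1) ^ ∑ j : Fin m, conjugatePart lam j := by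
  rw [sign_eq_neg_one_pow_of_strictMono_blocks]
  · congr! 2 with j
    simp only [boundaryPerm_castAdd, boundaryPerm_natAdd,
      horizontalStep_lt_verticalStep_iff hlam hm]
    exact card_equiv Fin.revPerm (by simp)
  · simpa only [StrictMono, Function.comp_apply, boundaryPerm_castAdd] using
      strictMono_verticalStep hlam hm
  · simpa only [StrictMono, Function.comp_apply, boundaryPerm_natAdd] using
      strictMono_horizontalStep lam

end BoundaryPath

theorem schurDet_eq_det_toeplitz_mul_schurDet_conjugatePart {R : Type*} [CommRing R] {ℓ m : ℕ}
    {a c : ℤ → R} (hac : toeplitz (ℓ + m) a * toeplitz (ℓ + m) c = 1) {lam : Fin ℓ → ℕ}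
    (hlam : Antitone lam) (hm : ∀ i, lam i ≤ m) :
    schurDet a lam = (-1) ^ (∑ j : Fin m, conjugatePart lam j) * (toeplitz (ℓ + m) a).det *
      schurDet c fun j : Fin m => conjugatePart lam j := by
  let e : Fin ℓ ⊕ Fin m ≃ Fin (ℓ + m) := (Fin.revPerm.sumCongr (.refl _)).trans finSumFinEquiv
  let π := boundaryPerm hlam hm
  have hvertical (i : Fin ℓ) : e (Sum.inl i) = Fin.castAdd m i.rev := rfl
  have hhorizontal (j : Fin m) : e (Sum.inr j) = Fin.natAdd ℓ j := rfl
  have hrow : schurDet a lam =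
      ((toeplitz (ℓ + m) a).submatrix (π ∘ e ∘ Sum.inl) (e ∘ Sum.inl)).det := by
    refine congrArg Matrix.det (Matrix.ext fun i j => congrArg a ?_)
    simp only [Function.comp_apply, hvertical, π, boundaryPerm_castAdd, verticalStep, Fin.rev_rev,
      Fin.val_castAdd, Fin.val_rev]
    omega
  have hcolumn : schurDet c (fun j : Fin m => conjugatePart lam j) =
      ((toeplitz (ℓ + m) c).submatrix (e ∘ Sum.inr) (π ∘ e ∘ Sum.inr)).det := by
    rw [← Matrix.det_transpose]
    refine congrArg Matrix.det (Matrix.ext fun i j => congrArg c ?_)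
    have := conjugatePart_le lam i
    simp only [Function.comp_apply, hhorizontal, π, boundaryPerm_natAdd, horizontalStep,
      Fin.val_natAdd]
    omega
  rw [hrow, hcolumn, det_minor_eq_sign_mul_det_mul_det_complementary_minor hac e π,
    sign_boundaryPerm]
  simp

/-- **Schur-determinant duality (conjugate partition identity).**
If `a b : ℤ → R` vanish in negative degrees, have `a 0 = b 0 = 1`, and satisfy
`∑_{i=0}^n (-1)^i a i * b (n - i) = 0` for all `n ≥ 1` (i.e. `A(t)` and `B(-t)` are mutually
inverse power series), and `λ` is a partition with at most `ℓ` parts, each at most `m`,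
with conjugate partition `λ'`, then `det (a (λ_i - i + j))_{ℓ×ℓ} = det (b (λ'_i - i + j))_{m×m}`. -/
theorem stmt_1 (R : Type*) [CommRing R] (a b : ℤ → R)
    (ha_neg : ∀ n : ℤ, n < 0 → a n = 0) (hb_neg : ∀ n : ℤ, n < 0 → b n = 0)
    (ha0 : a 0 = 1) (hb0 : b 0 = 1)
    (hab : ∀ n : ℕ, 1 ≤ n →
      ∑ i ∈ Finset.range (n + 1), (-1 : R) ^ i * a i * b ((n : ℤ) - i) = 0)
    (ℓ m : ℕ) (hℓ : 1 ≤ ℓ) (hm : 1 ≤ m)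
    (lam : Fin ℓ → ℕ) (hanti : Antitone lam) (hbound : lam ⟨0, hℓ⟩ ≤ m) :
    Matrix.det (Matrix.of fun i j : Fin ℓ => a ((lam i : ℤ) - (i : ℤ) + (j : ℤ))) =
      Matrix.det (Matrix.of fun i j : Fin m =>
        b (((Finset.univ.filter fun t : Fin ℓ => (i : ℕ) + 1 ≤ lam t).card : ℤ)
            - (i : ℤ) + (j : ℤ))) := by
  have hparts (i : Fin ℓ) : lam i ≤ m := (hanti (Nat.zero_le i)).trans hbound
  have hinv := toeplitz_mul_toeplitz_alternate ha_neg hb_neg (by rw [ha0, hb0, one_mul]) hab (ℓ + m)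
  let lam' (j : Fin m) : ℕ := conjugatePart lam j
  calc schurDet a lam
      = (-1) ^ (∑ j, lam' j) * schurDet (alternate b) lam' := by
        rw [schurDet_eq_det_toeplitz_mul_schurDet_conjugatePart hinv hanti hparts,
          det_toeplitz ha_neg, ha0, one_pow, mul_one]
    _ = (-1) ^ (∑ j, lam' j) * ((-1) ^ (∑ j, lam' j) * schurDet b lam') := by
        rw [schurDet_alternate]
    _ = schurDet b lam' := by
        rw [← mul_assoc, pow_mul_pow_eq_one _ (by simp), one_mul]
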